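/- Let b > 0, let 0 = x₀ < x₁ < ⋯ < x_M = ℓ be a grid, for each i = 1,…,M let w_i : [x_{i−1},x_i] → ℝ be continuously differentiable, and let ŵ₀, ŵ₁, …, ŵ_M ∈ ℝ with ŵ₀ = 0. Then Σ_{i=1}^M [ −∫_{x_{i−1}}^{x_i} b w_i w_i' dx + b w_i(x_i)(w_i(x_i) − ŵ_i) − b ŵ_{i−1}(w_i(x_{i−1}) − ŵ_{i−1}) ] + b ŵ_M² = (b/2) Σ_{i=1}^M [ (w_i(x_{i−1}) − ŵ_{i−1})² + (w_i(x_i) − ŵ_i)² ] + (b/2) ŵ_M². -/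

import Mathlib

/-! On each element `∫ w w'` depends only on the end values of `w`, and completing the squares
turns the upwind flux terms into the two squared jumps plus `b / 2` times the decrease of the
squared hybrid values across the element. The latter telescopes over the mesh. -/

theorem integral_mul_deriv_self {f : ℝ → ℝ} {p q : ℝ}
    (hf : AbsolutelyContinuousOnInterval f p q) :
    ∫ y in p..q, f y * deriv f y = (f q ^ 2 - f p ^ 2) / 2 := by
  have by_parts := hf.integral_mul_deriv_eq_deriv_mul hf
  simp only [mul_comm (deriv f _)] at by_parts
  linarith

theorem upwind_element_form_eq_sq_jumps_add_sub {f : ℝ → ℝ} {p q : ℝ}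
    (hf : AbsolutelyContinuousOnInterval f p q) (b u v : ℝ) :
    -(∫ y in p..q, b * f y * deriv f y) + b * f q * (f q - v) - b * u * (f p - u)
      = b / 2 * ((f p - u) ^ 2 + (f q - v) ^ 2) + (b / 2 * u ^ 2 - b / 2 * v ^ 2) := by
  simp only [mul_assoc b, intervalIntegral.integral_const_mul, integral_mul_deriv_self hf]
  ring

theorem stmt_11_general (b : ℝ) (M : ℕ) (x : ℕ → ℝ) (w : ℕ → ℝ → ℝ) (wh : ℕ → ℝ)
    (hw : ∀ i < M, AbsolutelyContinuousOnInterval (w i) (x i) (x (i + 1))) :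
    (∑ i ∈ Finset.range M,
        (-(∫ y in x i..x (i + 1), b * w i y * deriv (w i) y)
          + b * w i (x (i + 1)) * (w i (x (i + 1)) - wh (i + 1))
          - b * wh i * (w i (x i) - wh i)))
      + b * wh M ^ 2
    = b / 2 * (∑ i ∈ Finset.range M,
        ((w i (x i) - wh i) ^ 2 + (w i (x (i + 1)) - wh (i + 1)) ^ 2))
      + b / 2 * wh M ^ 2 + b / 2 * wh 0 ^ 2 := by
  have element_identity (i : ℕ) (hi : i ∈ Finset.range M) :=
    upwind_element_form_eq_sq_jumps_add_sub (hw i (Finset.mem_range.mp hi)) b (wh i) (wh (i + 1))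
  have telescope : ∑ i ∈ Finset.range M, (b / 2 * wh i ^ 2 - b / 2 * wh (i + 1) ^ 2)
      = b / 2 * wh 0 ^ 2 - b / 2 * wh M ^ 2 :=
    Finset.sum_range_sub' (fun i => b / 2 * wh i ^ 2) M
  rw [Finset.sum_congr rfl element_identity, Finset.sum_add_distrib, ← Finset.mul_sum, telescope]
  ring

/-- Semi-ellipticity identity of the hybrid dG bilinear form on a single edge `[0,ℓ]`
with flow in positive direction (`b > 0`): summing the element-local contributions over
the mesh `0 = x₀ < ⋯ < x_M = ℓ`, with hybrid values `wh i` vanishing at the inflow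
vertex, gives the sum of the squared upwind jumps plus the outflow term. -/
theorem stmt_11 (b ℓ : ℝ) (hb : 0 < b) (M : ℕ) (hM : 1 ≤ M) (x : ℕ → ℝ)
    (hx0 : x 0 = 0) (hxM : x M = ℓ) (hmono : ∀ i < M, x i < x (i + 1))
    (w : ℕ → ℝ → ℝ) (hw : ∀ i < M, ContDiff ℝ 1 (w i))
    (wh : ℕ → ℝ) (hwh0 : wh 0 = 0) :
    (∑ i ∈ Finset.range M,
        (-(∫ y in x i..x (i + 1), b * w i y * deriv (w i) y)
          + b * w i (x (i + 1)) * (w i (x (i + 1)) - wh (i + 1))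
          - b * wh i * (w i (x i) - wh i)))
      + b * wh M ^ 2
    = b / 2 * (∑ i ∈ Finset.range M,
        ((w i (x i) - wh i) ^ 2 + (w i (x (i + 1)) - wh (i + 1)) ^ 2))
      + b / 2 * wh M ^ 2 := by
  simpa [hwh0] using stmt_11_general b M x w wh fun i hi =>
    (hw i hi).contDiffOn.absolutelyContinuousOnInterval
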